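/- (Proposition 2.) Let α, β, γ, δ, χ be real numbers with χ ≠ 0 and αδ − βγ = 1, and let C, S be real numbers with C² + S² = 1. Let 𝒜, ℬ, 𝒞 be the entries of the matrix [[𝒜, ℬ],[𝒞, 𝒜]] = [[δ, β],[γ, α]] · [[C, χS],[−χ⁻¹S, C]] · [[α, β],[γ, δ]]. Let q₀, p₀ be independent standard normal random variables and let Δ(q₀,p₀) = (1/2)((𝒜q₀ + ℬp₀)² + (𝒞q₀ + 𝒜p₀)²) − (1/2)(q₀² + p₀²). Then 𝔼(Δ) ≤ ρ, where ρ = 2(αγ + βδ)² + (1/2)[(δ² + γ²)χ − (α² + β²)χ⁻¹]². -/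

import Mathlib

open MeasureTheory ProbabilityTheory

lemma aux_int_sq : Integrable (fun x : ℝ => x ^ 2) (gaussianReal 0 1) :=
  (memLp_id_gaussianReal (μ := 0) (v := 1) 2).integrable_sq

lemma aux_int_id : Integrable (fun x : ℝ => x) (gaussianReal 0 1) :=
  (memLp_id_gaussianReal (μ := 0) (v := 1) 1).integrable le_rfl

lemma aux_sq : ∫ x : ℝ, x ^ 2 ∂(gaussianReal 0 1) = 1 := by
  have h := variance_id_gaussianReal (μ := 0) (v := 1)
  rw [variance_of_integral_eq_zero aemeasurable_id (by simp)] at h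
  simpa using h

lemma aux_quad (a b c : ℝ) :
    ∫ x : ℝ × ℝ, (a * x.1 ^ 2 + b * (x.1 * x.2) + c * x.2 ^ 2)
      ∂((gaussianReal 0 1).prod (gaussianReal 0 1)) = a + c := by
  have h1 : Integrable (fun x : ℝ × ℝ => a * x.1 ^ 2)
      ((gaussianReal 0 1).prod (gaussianReal 0 1)) := (aux_int_sq.comp_fst _).const_mul a
  have h3 : Integrable (fun x : ℝ × ℝ => c * x.2 ^ 2)
      ((gaussianReal 0 1).prod (gaussianReal 0 1)) := (aux_int_sq.comp_snd _).const_mul c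
  have h2 : Integrable (fun x : ℝ × ℝ => b * (x.1 * x.2))
      ((gaussianReal 0 1).prod (gaussianReal 0 1)) := (aux_int_id.mul_prod aux_int_id).const_mul b
  have e1 : ∫ x : ℝ × ℝ, x.1 ^ 2 ∂((gaussianReal 0 1).prod (gaussianReal 0 1)) = 1 := by
    have := integral_fun_fst (μ := gaussianReal 0 1) (ν := gaussianReal 0 1) (fun x : ℝ => x ^ 2)
    rw [this, aux_sq]; simp
  have e3 : ∫ x : ℝ × ℝ, x.2 ^ 2 ∂((gaussianReal 0 1).prod (gaussianReal 0 1)) = 1 := by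
    have := integral_fun_snd (μ := gaussianReal 0 1) (ν := gaussianReal 0 1) (fun x : ℝ => x ^ 2)
    rw [this, aux_sq]; simp
  have e2 : ∫ x : ℝ × ℝ, x.1 * x.2 ∂((gaussianReal 0 1).prod (gaussianReal 0 1)) = 0 := by
    have := integral_prod_mul (μ := gaussianReal 0 1) (ν := gaussianReal 0 1)
      (fun x : ℝ => x) (fun x : ℝ => x)
    rw [this]; simp
  have h12 : Integrable (fun x : ℝ × ℝ => a * x.1 ^ 2 + b * (x.1 * x.2))
      ((gaussianReal 0 1).prod (gaussianReal 0 1)) := h1.add h2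
  rw [integral_add h12 h3, integral_add h1 h2, integral_const_mul, integral_const_mul,
    integral_const_mul, e1, e2, e3]
  ring

/-- Proposition 2: the expected energy error of a symmetric processed leg is
bounded by `ρ = 2(αγ+βδ)² + (1/2)[(δ²+γ²)χ - (α²+β²)χ⁻¹]²`. -/
theorem expected_energy_error_bound (α β γ δ χ C S : ℝ) (hχ : χ ≠ 0)
    (hdet : α * δ - β * γ = 1) (hCS : C ^ 2 + S ^ 2 = 1) :
    let M : Matrix (Fin 2) (Fin 2) ℝ :=
      !![δ, β; γ, α] * !![C, χ * S; -χ⁻¹ * S, C] * !![α, β; γ, δ]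
    (∫ x : ℝ × ℝ,
        ((1 / 2) * ((M 0 0 * x.1 + M 0 1 * x.2) ^ 2 + (M 1 0 * x.1 + M 1 1 * x.2) ^ 2) -
          (1 / 2) * (x.1 ^ 2 + x.2 ^ 2))
        ∂((gaussianReal 0 1).prod (gaussianReal 0 1))) ≤
      2 * (α * γ + β * δ) ^ 2 +
        (1 / 2) * ((δ ^ 2 + γ ^ 2) * χ - (α ^ 2 + β ^ 2) * χ⁻¹) ^ 2 := by
  intro M
  have hM : M.det = 1 := by
    have hx : χ * χ⁻¹ = 1 := mul_inv_cancel₀ hχ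
    simp only [M, Matrix.det_mul, Matrix.det_fin_two_of]
    have h1 : δ * α - β * γ = 1 := by linarith
    have h2 : C * C - χ * S * (-χ⁻¹ * S) = 1 := by linear_combination hCS + S ^ 2 * hx
    rw [h1, h2, hdet]; norm_num
  rw [Matrix.det_fin_two] at hM
  have h11 : M 1 1 = M 0 0 := by
    simp [M]; ring
  have hs : M 0 1 + M 1 0 = 2 * C * (α * γ + β * δ)
      + S * ((δ ^ 2 + γ ^ 2) * χ - (α ^ 2 + β ^ 2) * χ⁻¹) := by
    simp [M]; ring
  rw [h11] at hM ⊢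
  generalize M 0 0 = A at *
  generalize M 0 1 = B at *
  generalize M 1 0 = D at *
  generalize (δ ^ 2 + γ ^ 2) * χ - (α ^ 2 + β ^ 2) * χ⁻¹ = v at *
  generalize α * γ + β * δ = u at *
  have hI := aux_quad ((A ^ 2 + D ^ 2 - 1) / 2) (A * B + D * A) ((B ^ 2 + A ^ 2 - 1) / 2)
  have hE : ∀ x : ℝ × ℝ, (1 / 2) * ((A * x.1 + B * x.2) ^ 2 + (D * x.1 + A * x.2) ^ 2) -
      (1 / 2) * (x.1 ^ 2 + x.2 ^ 2) = (A ^ 2 + D ^ 2 - 1) / 2 * x.1 ^ 2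
      + (A * B + D * A) * (x.1 * x.2) + (B ^ 2 + A ^ 2 - 1) / 2 * x.2 ^ 2 := fun x => by ring
  simp_rw [hE]
  rw [hI]
  have h4 : (A ^ 2 + D ^ 2 - 1) / 2 + (B ^ 2 + A ^ 2 - 1) / 2 = (B + D) ^ 2 / 2 := by
    linear_combination hM
  have h5 : 2 * u ^ 2 + 1 / 2 * v ^ 2 - (2 * C * u + S * v) ^ 2 / 2
      = (2 * S * u - C * v) ^ 2 / 2 := by
    linear_combination (-(2 * u ^ 2 + v ^ 2 / 2)) * hCS
  rw [h4, hs]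
  nlinarith [sq_nonneg (2 * S * u - C * v)]
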